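/- Let B = (G, P, ι) be an acyclic generalized Bayesian network whose initial distribution ι is a product distribution (a classical Bayesian network), and let I = d-sep(G). Then the CPT-I semantics of B is the singleton consisting of the standard BN semantics: [B]_{Cpt-I} = {dist_BN(B)}. That is, dist_BN(B) is the unique distribution μ over assignments of V with μ|_{Init(G)} = ι that is strongly CPT-consistent for every non-initial node and satisfies I ⊆ Indep(μ). -/

import Mathlib

open Filter
open scoped Classical

noncomputable section

namespace GBNPaper

variable {V : Type} [Fintype V] [DecidableEq V]

/-- A distribution over a finite type: nonnegative values summing to one. -/
def IsDist {α : Type} [Fintype α] (μ : α → ℝ) : Prop :=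
  (∀ a, 0 ≤ μ a) ∧ ∑ a, μ a = 1

/-- The set of parents of a node `X` w.r.t. an edge set `E`. -/
def Pre (E : Finset (V × V)) (X : V) : Finset V :=
  (E.filter fun e => e.2 = X).image Prod.fst

/-- The set of initial (parentless) nodes. -/
def InitSet (E : Finset (V × V)) : Finset V :=
  Finset.univ.filter fun X => Pre E X = ∅

/-- Assignments over a subset `U` of the nodes. -/
abbrev Asg (U : Finset V) : Type := {x // x ∈ U} → Bool

/-- A full assignment `b` agrees with a partial assignment `d` on `U`. -/
abbrev Agrees (b : V → Bool) (U : Finset V) (d : Asg U) : Prop :=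
  ∀ x : {x // x ∈ U}, b x.1 = d x

/-- A generalized Bayesian network over node set `V`. -/
structure GBN (V : Type) [Fintype V] [DecidableEq V] where
  /-- the directed edges -/
  edges : Finset (V × V)
  /-- CPT entries: the probability of `X = T` given an assignment of the parents of `X` -/
  cpt : (X : V) → Asg (Pre edges X) → ℝ
  cpt_nonneg : ∀ X b, 0 ≤ cpt X b
  cpt_le_one : ∀ X b, cpt X b ≤ 1
  /-- the initial distribution over assignments of the initial nodes -/
  ι : Asg (InitSet edges) → ℝ
  ι_dist : IsDist ι

/-- Probability of an event (set of full assignments) under `μ`. -/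
def probIf (μ : (V → Bool) → ℝ) (p : (V → Bool) → Prop) : ℝ :=
  ∑ b : V → Bool, if p b then μ b else 0

/-- The marginal distribution of `μ` on `U`. -/
def marginal (μ : (V → Bool) → ℝ) (U : Finset V) : Asg U → ℝ :=
  fun d => probIf μ fun b => Agrees b U d

/-- `Pr(X = v | parents as given by b)`. -/
def copyProb (B : GBN V) (X : V) (v : Bool) (b : V → Bool) : ℝ :=
  if v then B.cpt X (fun p => b p.1) else 1 - B.cpt X (fun p => b p.1)

/-- The standard BN semantics (chain rule) of a GBN. -/
def distBN (B : GBN V) (b : V → Bool) : ℝ :=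
  B.ι (fun x => b x.1) *
    ∏ X ∈ Finset.univ \ InitSet B.edges, copyProb B X (b X) b

/-- The edge set contains no directed cycle. -/
def Acyclic (E : Finset (V × V)) : Prop :=
  ∀ x : V, ¬ Relation.TransGen (fun a b => (a, b) ∈ E) x x

/-- `C` is a cutset: every directed cycle contains a node of `C`. -/
def IsCutset (E : Finset (V × V)) (C : Finset V) : Prop :=
  ∀ x : V, ¬ Relation.TransGen (fun a b => (a, b) ∈ E ∧ a ∉ C ∧ b ∉ C) x x

/-- The standard BN semantics of the `C`-dissected GBN `B↑C↑γ`, as a joint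
distribution over assignments of the original nodes `V` together with
assignments of the copies `C'` of the cutset nodes. -/
def distDissect (B : GBN V) (C : Finset V) (γ : Asg C → ℝ)
    (b : V → Bool) (c : Asg C) : ℝ :=
  B.ι (fun x => b x.1) * γ (fun x => b x.1) *
    (∏ X ∈ (Finset.univ \ InitSet B.edges) \ C, copyProb B X (b X) b) *
    ∏ Y ∈ C.attach, copyProb B Y.1 (c Y) b

/-- `Next(B,C,γ)`: restrict `dist_BN(B↑C↑γ)` to `(V∖C) ∪ C'` and re-identify
the copies with the original cutset nodes. -/
def Next (B : GBN V) (C : Finset V) (γ : Asg C → ℝ) (a : V → Bool) : ℝ :=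
  ∑ b : V → Bool,
    if ∀ x : V, x ∉ C → b x = a x then distDissect B C γ b (fun y => a y.1) else 0

/-- `Extend(B,C,γ) = dist_BN(B↑C↑γ)|_V`. -/
def Extend (B : GBN V) (C : Finset V) (γ : Asg C → ℝ) (a : V → Bool) : ℝ :=
  ∑ c : Asg C, distDissect B C γ a c

/-- Dirac (point) distribution. -/
def DiracD {α : Type} [DecidableEq α] (b : α) : α → ℝ := fun c => if c = b then 1 else 0

/-- Transition matrix of the cutset Markov chain `M_{B↑C}`:
`P(b,c) = Next(B,C,Dirac(b))|_C (c)`. -/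
def cutsetP (B : GBN V) (C : Finset V) (b c : Asg C) : ℝ :=
  marginal (Next B C (DiracD b)) C c

/-- Vector-matrix multiplication `γ·P`. -/
def vecMul {α : Type} [Fintype α] (γ : α → ℝ) (P : α → α → ℝ) : α → ℝ :=
  fun c => ∑ b, γ b * P b c

/-- The transient distributions `γ0·P^n`. -/
def matIter {α : Type} [Fintype α] (P : α → α → ℝ) (γ0 : α → ℝ) : ℕ → (α → ℝ)
  | 0 => γ0
  | n + 1 => vecMul (matIter P γ0 n) P

/-- The sequence `γ_{n+1} = Next(B,C,γ_n)|_C`. -/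
def nextSeq (B : GBN V) (C : Finset V) (γ0 : Asg C → ℝ) : ℕ → (Asg C → ℝ)
  | 0 => γ0
  | n + 1 => marginal (Next B C (nextSeq B C γ0 n)) C

/-- Cesàro averages of a sequence of vectors. -/
def cesaro {α : Type} (f : ℕ → α → ℝ) (n : ℕ) : α → ℝ :=
  fun a => (∑ i ∈ Finset.range (n + 1), f i a) / (n + 1)

/-- The Markov chain semantics `[B]_{MC-C}`: image of
`γ0 ↦ Extend(B,C,lrf^{γ0})` over all initial cutset distributions `γ0`,
where `lrf^{γ0}` is the Cesàro limit of the transient distributions. -/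
def MCSem (B : GBN V) (C : Finset V) : Set ((V → Bool) → ℝ) :=
  { μ | ∃ γ0 γ, IsDist γ0 ∧
      Tendsto (cesaro (matIter (cutsetP B C) γ0)) atTop (nhds γ) ∧
      μ = Extend B C γ }

/-- The limit semantics `[B]_{Lim-C}`. -/
def LimSem (B : GBN V) (C : Finset V) : Set ((V → Bool) → ℝ) :=
  { μ | ∃ γ0 γ, IsDist γ0 ∧
      Tendsto (nextSeq B C γ0) atTop (nhds γ) ∧
      μ = Extend B C γ }

/-- The limit average semantics `[B]_{LimAvg-C}`. -/
def LimAvgSem (B : GBN V) (C : Finset V) : Set ((V → Bool) → ℝ) :=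
  { μ | ∃ γ0 γ, IsDist γ0 ∧
      Tendsto (cesaro (nextSeq B C γ0)) atTop (nhds γ) ∧
      μ = Extend B C γ }

/-- The Markov chain semantics in stationary-distribution form:
`{ Extend(B,C,γ) : γ a distribution with γ = γ·P }`. -/
def MCStatSem (B : GBN V) (C : Finset V) : Set ((V → Bool) → ℝ) :=
  { μ | ∃ γ : Asg C → ℝ, IsDist γ ∧ γ = vecMul γ (cutsetP B C) ∧ μ = Extend B C γ }

/-- Strong CPT-consistency of `μ` for node `X`. -/
def StrongCPT (B : GBN V) (μ : (V → Bool) → ℝ) (X : V) : Prop :=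
  ∀ c : Asg (Pre B.edges X),
    probIf μ (fun f => f X = true ∧ Agrees f (Pre B.edges X) c) =
      probIf μ (fun f => Agrees f (Pre B.edges X) c) * B.cpt X c

/-- Weak CPT-consistency of `μ` for node `X`. -/
def WeakCPT (B : GBN V) (μ : (V → Bool) → ℝ) (X : V) : Prop :=
  probIf μ (fun f => f X = true) =
    ∑ c : Asg (Pre B.edges X),
      probIf μ (fun f => Agrees f (Pre B.edges X) c) * B.cpt X c

/-- The CPT semantics `[B]_{Cpt}`. -/
def CptSem (B : GBN V) : Set ((V → Bool) → ℝ) :=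
  { μ | IsDist μ ∧ marginal μ (InitSet B.edges) = B.ι ∧
      ∀ X, X ∉ InitSet B.edges → StrongCPT B μ X }

/-- `(X ⊥ Y | Z) ∈ Indep(μ)`. -/
def IndepTriple (μ : (V → Bool) → ℝ) (X Y Z : Finset V) : Prop :=
  ∀ (a : Asg X) (b : Asg Y) (c : Asg Z),
    probIf μ (fun f => Agrees f Y b ∧ Agrees f Z c) = 0 ∨
    probIf μ (fun f => Agrees f X a ∧ Agrees f Y b ∧ Agrees f Z c) /
        probIf μ (fun f => Agrees f Y b ∧ Agrees f Z c) =
      probIf μ (fun f => Agrees f X a ∧ Agrees f Z c) /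
        probIf μ (fun f => Agrees f Z c)

def PairwiseDisjoint3 (X Y Z : Finset V) : Prop :=
  Disjoint X Y ∧ Disjoint X Z ∧ Disjoint Y Z

/-- `Indep(μ)` as a set of triples. -/
def IndepSet (μ : (V → Bool) → ℝ) : Set (Finset V × Finset V × Finset V) :=
  { t | PairwiseDisjoint3 t.1 t.2.1 t.2.2 ∧ IndepTriple μ t.1 t.2.1 t.2.2 }

/-- The CPT-I semantics `[B]_{Cpt-I}`. -/
def CptISem (B : GBN V) (I : Set (Finset V × Finset V × Finset V)) :
    Set ((V → Bool) → ℝ) :=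
  { μ | μ ∈ CptSem B ∧ I ⊆ IndepSet μ }

/-! d-separation -/

def Adjacent (E : Finset (V × V)) (x y : V) : Prop := (x, y) ∈ E ∨ (y, x) ∈ E

/-- Reachability along directed edges (including the node itself). -/
def Reaches (E : Finset (V × V)) (x y : V) : Prop :=
  Relation.ReflTransGen (fun a b => (a, b) ∈ E) x y

/-- An intermediate triple `a, w, b` on a path blocks it given `Z`:
either `w ∈ Z` and `w` lies in a chain or a fork, or `w` lies in a collider
and no node reachable from `w` (including `w`) is in `Z`. -/
def BlockedTriple (E : Finset (V × V)) (Z : Finset V) (a w b : V) : Prop :=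
  (w ∈ Z ∧ (((a, w) ∈ E ∧ (w, b) ∈ E) ∨ ((b, w) ∈ E ∧ (w, a) ∈ E) ∨
      ((w, a) ∈ E ∧ (w, b) ∈ E))) ∨
  ((a, w) ∈ E ∧ (b, w) ∈ E ∧ ∀ d, Reaches E w d → d ∉ Z)

/-- A path (as a list of nodes) is blocked given `Z`. -/
def Blocked (E : Finset (V × V)) (Z : Finset V) (W : List V) : Prop :=
  ∃ l₁ a w b l₂, W = l₁ ++ a :: w :: b :: l₂ ∧ BlockedTriple E Z a w b

/-- `x` and `y` are d-separated given `Z`: every undirected simple path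
from `x` to `y` is blocked given `Z`. -/
def DSepNodes (E : Finset (V × V)) (x y : V) (Z : Finset V) : Prop :=
  ∀ W : List V, W.Chain' (Adjacent E) → W.Nodup →
    W.head? = some x → W.getLast? = some y → Blocked E Z W

def DSep (E : Finset (V × V)) (X Y Z : Finset V) : Prop :=
  ∀ x ∈ X, ∀ y ∈ Y, DSepNodes E x y Z

/-- `d-sep(G)` as a set of triples of pairwise disjoint node sets. -/
def DSepSet (E : Finset (V × V)) : Set (Finset V × Finset V × Finset V) :=
  { t | PairwiseDisjoint3 t.1 t.2.1 t.2.2 ∧ DSep E t.1 t.2.1 t.2.2 }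

/-- `Close(G)`: add an edge between every ordered pair of distinct initial nodes. -/
def Close (E : Finset (V × V)) : Finset (V × V) :=
  E ∪ ((InitSet E ×ˢ InitSet E).filter fun p => p.1 ≠ p.2)

/-- `G[C]`: remove all edges into nodes of `C` (so the nodes of `C` are initial). -/
def CutGraph (E : Finset (V × V)) (C : Finset V) : Finset (V × V) :=
  E.filter fun e => e.2 ∉ C

/-- `ι` is a product distribution: it factorizes into its single-node marginals,
i.e. the initial nodes are mutually independent under `ι`. -/
def IsProductDist {U : Finset V} (ι : Asg U → ℝ) : Prop :=
  ∀ b : Asg U,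
    ι b = ∏ x : {x // x ∈ U}, ∑ b' : Asg U, if b' x = b x then ι b' else 0

/-! Markov chain notions -/

/-- Reachability in the underlying graph of a DTMC. -/
def MCReach {α : Type} (P : α → α → ℝ) (x y : α) : Prop :=
  Relation.ReflTransGen (fun a b => 0 < P a b) x y

/-- Bottom strongly connected component of a DTMC: nonempty, closed under
reachability, and strongly connected. -/
def IsBSCC {α : Type} (P : α → α → ℝ) (D : Set α) : Prop :=
  D.Nonempty ∧ (∀ x ∈ D, ∀ y, MCReach P x y → y ∈ D) ∧
    ∀ x ∈ D, ∀ y ∈ D, MCReach P x y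

/-- Walks of a given length along positive-probability transitions. -/
def walkLen {α : Type} (P : α → α → ℝ) : ℕ → α → α → Prop
  | 0, x, y => x = y
  | n + 1, x, y => ∃ z, 0 < P x z ∧ walkLen P n z y

/-- The lengths of the cycles of `D`. -/
def CycleLens {α : Type} (P : α → α → ℝ) (D : Set α) : Set ℕ :=
  { n | 0 < n ∧ ∃ x ∈ D, walkLen P n x x }

/-- `D` is aperiodic: the gcd of the lengths of its cycles equals 1. -/
def AperiodicBSCC {α : Type} (P : α → α → ℝ) (D : Set α) : Prop :=
  ∀ d : ℕ, (∀ n ∈ CycleLens P D, d ∣ n) → d = 1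

/-- `D` is periodic: the gcd of the lengths of its cycles is greater than 1. -/
def PeriodicBSCC {α : Type} (P : α → α → ℝ) (D : Set α) : Prop :=
  ∃ d : ℕ, 1 < d ∧ ∀ n ∈ CycleLens P D, d ∣ n

/-- A GBN is smooth if all CPT entries and all values of `ι` lie in `(0,1)`. -/
def Smooth (B : GBN V) : Prop :=
  (∀ X b, B.cpt X b ∈ Set.Ioo (0 : ℝ) 1) ∧ ∀ d, B.ι d ∈ Set.Ioo (0 : ℝ) 1

/-!
For a product distribution `ι` the chain rule is a product of local kernels, one for each node.
Summing out nodes without remaining children, children before parents, shows that this product is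
a distribution with the prescribed CPTs. If `X` and `Y` are d-separated by `Z`, then among the
ancestors of `X ∪ Y ∪ Z` the kernels whose families meet a node outside `Z` that is d-connected to
`Y` and the remaining kernels share only variables in `Z`, so `X` and `Y` are independent given `Z`.

Conversely, let `μ` be CPT-consistent and satisfy all these independences. When the nodes are added
parents first, each new node is d-separated by its parents from the nodes added so far, so its
conditional probability is its kernel and `μ` is the product of the kernels.
-/

section Graph

omit [Fintype V]

variable {E : Finset (V × V)} {A : Finset V}

theorem mem_Pre {p N : V} : p ∈ Pre E N ↔ (p, N) ∈ E := by
  simp [Pre]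

theorem Acyclic.notMem_Pre_self (hE : Acyclic E) (N : V) : N ∉ Pre E N :=
  fun h => hE N (.single (mem_Pre.1 h))

section

omit [DecidableEq V]

theorem Acyclic.notMem_swap (hE : Acyclic E) {a b : V} (h : (a, b) ∈ E) : (b, a) ∉ E :=
  fun h' => hE a (.tail (.single h) h')

theorem Acyclic.not_adjacent_self (hE : Acyclic E) (a : V) : ¬ Adjacent E a a :=
  fun h => hE a (.single (or_self_iff.1 h))

/-- A set of nodes closed under parents. -/
def Ancestral (E : Finset (V × V)) (A : Finset V) : Prop :=
  ∀ a b, (a, b) ∈ E → b ∈ A → a ∈ A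

theorem ancestral_empty : Ancestral E ∅ :=
  fun _ _ _ hb => absurd hb (Finset.notMem_empty _)

theorem Ancestral.mem_of_reaches (hA : Ancestral E A) {a b : V} (h : Reaches E a b) (hb : b ∈ A) :
    a ∈ A := by
  induction h using Relation.ReflTransGen.head_induction_on with
  | refl => exact hb
  | head hac _ ih => exact hA _ _ hac ih

end

theorem Ancestral.pre_subset (hA : Ancestral E A) {N : V} (hN : N ∈ A) : Pre E N ⊆ A :=
  fun p hp => hA p N (mem_Pre.1 hp) hN

theorem Ancestral.insert_of_pre_subset (hA : Ancestral E A) {N : V} (hN : Pre E N ⊆ A) :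
    Ancestral E (insert N A) := by
  intro a b hab hb
  rcases Finset.mem_insert.1 hb with rfl | hb
  · exact Finset.mem_insert_of_mem (hN (mem_Pre.2 hab))
  · exact Finset.mem_insert_of_mem (hA a b hab hb)

end Graph

section FiniteGraph

variable {E : Finset (V × V)} {A S : Finset V}

theorem mem_InitSet {N : V} : N ∈ InitSet E ↔ Pre E N = ∅ := by
  simp [InitSet]

theorem ancestral_InitSet : Ancestral E (InitSet E) := by
  intro a b hab hb
  have hPre : Pre E b = ∅ := mem_InitSet.1 hb
  simpa [hPre] using mem_Pre.2 hab

section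

omit [DecidableEq V]

/-- The ancestors of the nodes of `S`, the nodes of `S` included. -/
def ancestors (E : Finset (V × V)) (S : Finset V) : Finset V :=
  {v | ∃ e ∈ S, Reaches E v e}

theorem mem_ancestors {v : V} : v ∈ ancestors E S ↔ ∃ e ∈ S, Reaches E v e := by
  simp [ancestors]

theorem subset_ancestors : S ⊆ ancestors E S :=
  fun v hv => mem_ancestors.2 ⟨v, hv, .refl⟩

theorem ancestral_ancestors : Ancestral E (ancestors E S) := by
  intro a b hab hb
  obtain ⟨e, he, hbe⟩ := mem_ancestors.1 hb
  exact mem_ancestors.2 ⟨e, he, .head hab hbe⟩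

omit [Fintype V] in
theorem Acyclic.wellFounded [Finite V] (hE : Acyclic E) :
    WellFounded (Relation.TransGen fun a b => (a, b) ∈ E) :=
  have : Std.Irrefl (Relation.TransGen fun a b => (a, b) ∈ E) := ⟨hE⟩
  Finite.wellFounded_of_trans_of_irrefl _

end

theorem Acyclic.notMem_ancestors_Pre (hE : Acyclic E) (N : V) : N ∉ ancestors E (Pre E N) := by
  intro h
  obtain ⟨p, hp, hNp⟩ := mem_ancestors.1 h
  exact hE N (.tail' hNp (mem_Pre.1 hp))

theorem Acyclic.exists_notMem_pre_subset (hE : Acyclic E) (hA : A ≠ Finset.univ) :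
    ∃ N ∉ A, Pre E N ⊆ A := by
  obtain ⟨N, hN, hmin⟩ :=
    hE.wellFounded.has_min {v | v ∉ A} <| by
      simpa only [Set.Nonempty, Set.mem_ofPred_eq, ne_eq, Finset.eq_univ_iff_forall, not_forall]
        using hA
  exact ⟨N, hN, fun p hp => not_not.1 fun hpA => hmin p hpA (.single (mem_Pre.1 hp))⟩

theorem Ancestral.induction_insert (hE : Acyclic E) (hA : Ancestral E A) {P : Finset V → Prop}
    (base : P A)
    (step : ∀ C N, Ancestral E C → A ⊆ C → N ∉ C → Pre E N ⊆ C → P C → P (insert N C)) :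
    P Finset.univ := by
  suffices h : ∀ n, ∀ C : Finset V, Cᶜ.card = n → Ancestral E C → A ⊆ C → P C → P Finset.univ from
    h _ A rfl hA subset_rfl base
  intro n
  induction n with
  | zero =>
    intro C hcard _ _ hPC
    obtain rfl : C = Finset.univ := by simpa using hcard
    exact hPC
  | succ n ih =>
    intro C hcard hC hAC hPC
    obtain ⟨N, hN, hNC⟩ := hE.exists_notMem_pre_subset (A := C) fun h => by simp [h] at hcard
    refine ih _ ?_ (hC.insert_of_pre_subset hNC) (hAC.trans (Finset.subset_insert _ _))
      (step C N hC hAC hN hNC hPC)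
    rw [Finset.compl_insert, Finset.card_erase_of_mem (Finset.mem_compl.2 hN), hcard,
      Nat.add_sub_cancel]

end FiniteGraph

section Walks

omit [Fintype V] [DecidableEq V]

variable {E : Finset (V × V)} {X Y Z : Finset V}

/-- A walk, not necessarily simple, that is not blocked given `Z`. -/
def ActiveWalk (E : Finset (V × V)) (Z : Finset V) (W : List V) : Prop :=
  W.IsChain (Adjacent E) ∧ ¬ Blocked E Z W

theorem blocked_cons_cons_cons {a w b : V} {l : List V} :
    Blocked E Z (a :: w :: b :: l) ↔ BlockedTriple E Z a w b ∨ Blocked E Z (w :: b :: l) := by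
  constructor
  · rintro ⟨l₁, a', w', b', l₂, h, hblocked⟩
    rcases l₁ with _ | ⟨c, l₁⟩
    · simp only [List.nil_append, List.cons.injEq] at h
      obtain ⟨rfl, rfl, rfl, rfl⟩ := h
      exact .inl hblocked
    · exact .inr ⟨l₁, a', w', b', l₂, (List.cons.inj h).2, hblocked⟩
  · rintro (hblocked | ⟨l₁, a', w', b', l₂, h, hblocked⟩)
    · exact ⟨[], a, w, b, l, rfl, hblocked⟩
    · exact ⟨a :: l₁, a', w', b', l₂, by rw [h, List.cons_append], hblocked⟩

theorem Blocked.of_isInfix {W W' : List V} (h : Blocked E Z W) (hW : W <:+: W') :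
    Blocked E Z W' := by
  obtain ⟨l₁, a, w, b, l₂, rfl, hblocked⟩ := h
  obtain ⟨s, t, rfl⟩ := hW
  exact ⟨s ++ l₁, a, w, b, l₂ ++ t, by simp, hblocked⟩

theorem Blocked.three_le_length {W : List V} (h : Blocked E Z W) : 3 ≤ W.length := by
  obtain ⟨l₁, a, w, b, l₂, rfl, -⟩ := h
  simp only [List.length_append, List.length_cons]
  omega

theorem not_blockedTriple_of_collider (hE : Acyclic E) {a w b e : V} (haw : (a, w) ∈ E)
    (hbw : (b, w) ∈ E) (hwe : Reaches E w e) (he : e ∈ Z) : ¬ BlockedTriple E Z a w b := by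
  have hwa := hE.notMem_swap haw
  have hwb := hE.notMem_swap hbw
  rintro (⟨-, h⟩ | ⟨-, -, h⟩)
  · tauto
  · exact h e hwe he

theorem collider_of_not_blockedTriple {a w b : V} (h : ¬ BlockedTriple E Z a w b) (hw : w ∈ Z)
    (haw : Adjacent E a w) (hwb : Adjacent E w b) : (a, w) ∈ E ∧ (b, w) ∈ E := by
  unfold BlockedTriple at h
  unfold Adjacent at haw hwb
  tauto

namespace ActiveWalk

theorem singleton (a : V) : ActiveWalk E Z [a] :=
  ⟨.singleton a, fun h => by simpa using h.three_le_length⟩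

theorem pair {a b : V} (h : Adjacent E a b) : ActiveWalk E Z [a, b] :=
  ⟨by simpa using h, fun h => by simpa using h.three_le_length⟩

theorem cons_cons_cons_iff {a w b : V} {l : List V} :
    ActiveWalk E Z (a :: w :: b :: l) ↔
      Adjacent E a w ∧ ¬ BlockedTriple E Z a w b ∧ ActiveWalk E Z (w :: b :: l) := by
  simp only [ActiveWalk, blocked_cons_cons_cons, List.isChain_cons_cons, not_or]
  tauto

theorem adjacent {a b : V} {l : List V} (h : ActiveWalk E Z (a :: b :: l)) : Adjacent E a b :=
  (List.isChain_cons_cons.1 h.1).1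

theorem of_isInfix {W W' : List V} (h : ActiveWalk E Z W') (hW : W <:+: W') : ActiveWalk E Z W :=
  ⟨h.1.infix hW, fun hblocked => h.2 (hblocked.of_isInfix hW)⟩

theorem tail {a : V} {l : List V} (h : ActiveWalk E Z (a :: l)) : ActiveWalk E Z l :=
  h.of_isInfix (List.suffix_cons a l).isInfix

theorem cons {v u : V} {l : List V} (h : ActiveWalk E Z (u :: l)) (hvu : Adjacent E v u)
    (hl : ∀ a ∈ l.head?, ¬ BlockedTriple E Z v u a) : ActiveWalk E Z (v :: u :: l) := by
  cases l with
  | nil => exact pair hvu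
  | cons a l => exact cons_cons_cons_iff.2 ⟨hvu, hl a rfl, h⟩

theorem append_cons_cons {l₁ l₂ : List V} {a w b : V} (h₁ : ActiveWalk E Z (l₁ ++ [a, w]))
    (h : ¬ BlockedTriple E Z a w b) (h₂ : ActiveWalk E Z (w :: b :: l₂)) :
    ActiveWalk E Z (l₁ ++ a :: w :: b :: l₂) := by
  induction l₁ with
  | nil => exact cons_cons_cons_iff.2 ⟨h₁.adjacent, h, h₂⟩
  | cons c l₁ ih =>
    have ih := ih h₁.tail
    rcases l₁ with _ | ⟨d, _ | ⟨e, l₁⟩⟩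
    all_goals
      obtain ⟨hadj, htriple, -⟩ := cons_cons_cons_iff.1 h₁
      exact cons_cons_cons_iff.2 ⟨hadj, htriple, ih⟩

/-- Turning back would need a collider, which is blocked because no descendant of `w` is in `Z`. -/
theorem isChain_edge {w v : V} {l : List V} (h : ActiveWalk E Z (w :: v :: l)) (hwv : (w, v) ∈ E)
    (hw : ∀ d, Reaches E w d → d ∉ Z) : (w :: v :: l).IsChain fun a b => (a, b) ∈ E := by
  induction l generalizing w v with
  | nil => simpa using hwv
  | cons c l ih =>
    have hv : ∀ d, Reaches E v d → d ∉ Z := fun d hd => hw d (.head hwv hd)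
    obtain ⟨-, htriple, htail⟩ := cons_cons_cons_iff.1 h
    have hvc : (v, c) ∈ E := htail.adjacent.resolve_right fun hcv => htriple (.inr ⟨hwv, hcv, hv⟩)
    exact .cons_cons hwv (ih htail hvc hv)

theorem transGen_getLast {w v y : V} {l : List V} (h : ActiveWalk E Z (w :: v :: l))
    (hwv : (w, v) ∈ E) (hw : ∀ d, Reaches E w d → d ∉ Z) (hy : (v :: l).getLast? = some y) :
    Relation.TransGen (fun a b => (a, b) ∈ E) w y := by
  have hchain := (h.isChain_edge hwv hw).tail
  refine .head' hwv (List.relationReflTransGen_of_exists_isChain_cons l hchain ?_)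
  simpa [List.getLast?_eq_some_getLast] using hy

theorem not_blockedTriple_of_loop (hE : Acyclic E) {a w b : V} {l : List V}
    (h : ActiveWalk E Z (a :: w :: (l ++ [w, b]))) : ¬ BlockedTriple E Z a w b := by
  rcases l with _ | ⟨v, l⟩
  · exact absurd h.tail.adjacent (hE.not_adjacent_self w)
  obtain ⟨haw, hawv, hloop⟩ := cons_cons_cons_iff.1 h
  rintro (⟨hwZ, hchain⟩ | ⟨haw, -, hw⟩)
  · obtain ⟨m, u, hm⟩ : ∃ m u, v :: l = m ++ [u] :=
      ⟨_, _, (List.dropLast_append_getLast (List.cons_ne_nil v l)).symm⟩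
    obtain ⟨huw, huwb, hwb⟩ := cons_cons_cons_iff.1 <| h.of_isInfix (W := [u, w, b])
      ⟨a :: w :: m, [], by simp [hm]⟩
    have haw' := hE.notMem_swap (collider_of_not_blockedTriple hawv hwZ haw hloop.adjacent).1
    have hbw' := hE.notMem_swap (collider_of_not_blockedTriple huwb hwZ huw hwb.adjacent).2
    tauto
  · have hwv : (w, v) ∈ E :=
      hloop.adjacent.resolve_right fun hvw => hawv (.inr ⟨haw, hvw, hw⟩)
    have hcycle : ActiveWalk E Z (w :: v :: (l ++ [w])) := hloop.of_isInfix ⟨[], [b], by simp⟩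
    exact hE w (hcycle.transGen_getLast hwv hw (by rw [← List.cons_append, List.getLast?_concat]))

theorem shortcut (hE : Acyclic E) {l₁ l₂ l₃ : List V} {w : V}
    (h : ActiveWalk E Z (l₁ ++ w :: (l₂ ++ w :: l₃))) : ActiveWalk E Z (l₁ ++ w :: l₃) := by
  rcases l₃ with _ | ⟨b, l₃⟩
  · exact h.of_isInfix ⟨[], l₂ ++ [w], by simp⟩
  rcases List.eq_nil_or_concat' l₁ with rfl | ⟨l₁, a, rfl⟩
  · exact h.of_isInfix ⟨w :: l₂, [], by simp⟩
  have hloop : ActiveWalk E Z (a :: w :: (l₂ ++ [w, b])) := h.of_isInfix ⟨l₁, l₃, by simp⟩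
  rw [List.append_assoc]
  exact append_cons_cons (h.of_isInfix ⟨[], l₂ ++ w :: b :: l₃, by simp⟩)
    (not_blockedTriple_of_loop hE hloop) (h.of_isInfix ⟨l₁ ++ a :: w :: l₂, [], by simp⟩)

end ActiveWalk

theorem exists_eq_append_of_not_nodup {l : List V} (h : ¬ l.Nodup) :
    ∃ l₁ w l₂ l₃, l = l₁ ++ w :: (l₂ ++ w :: l₃) := by
  induction l with
  | nil => exact absurd List.nodup_nil h
  | cons a l ih =>
    by_cases ha : a ∈ l
    · obtain ⟨l₂, l₃, rfl⟩ := List.append_of_mem ha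
      exact ⟨[], a, l₂, l₃, rfl⟩
    · obtain ⟨l₁, w, l₂, l₃, rfl⟩ := ih fun hl => h (List.nodup_cons.2 ⟨ha, hl⟩)
      exact ⟨a :: l₁, w, l₂, l₃, rfl⟩

theorem ActiveWalk.exists_nodup (hE : Acyclic E) {W : List V} (h : ActiveWalk E Z W) :
    ∃ W', ActiveWalk E Z W' ∧ W'.Nodup ∧ W'.head? = W.head? ∧ W'.getLast? = W.getLast? := by
  induction hn : W.length using Nat.strong_induction_on generalizing W with
  | _ n ih =>
    by_cases hW : W.Nodup
    · exact ⟨W, h, hW, rfl, rfl⟩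
    obtain ⟨l₁, w, l₂, l₃, rfl⟩ := exists_eq_append_of_not_nodup hW
    have hlen : (l₁ ++ w :: l₃).length < n := by
      simp only [List.length_append, List.length_cons] at hn ⊢
      omega
    obtain ⟨W', hactive, hnodup, hhead, hlast⟩ := ih _ hlen (h.shortcut hE) rfl
    refine ⟨W', hactive, hnodup, hhead.trans ?_, hlast.trans ?_⟩
    · cases l₁ <;> rfl
    · rw [List.getLast?_append_cons, List.getLast?_append_cons, ← List.cons_append,
        List.getLast?_append_cons]

theorem DSepNodes.not_activeWalk (hE : Acyclic E) {x y : V} (h : DSepNodes E x y Z) {W : List V}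
    (hhead : W.head? = some x) (hlast : W.getLast? = some y) : ¬ ActiveWalk E Z W := by
  intro hW
  obtain ⟨W', hactive, hnodup, hhead', hlast'⟩ := hW.exists_nodup hE
  exact hactive.2 (h W' hactive.1 hnodup (hhead'.trans hhead) (hlast'.trans hlast))

theorem ActiveWalk.cons_of_edge (hE : Acyclic E) {u v : V} {l : List V}
    (h : ActiveWalk E Z (u :: l)) (hu : u ∉ Z) (huv : (u, v) ∈ E) :
    ActiveWalk E Z (v :: u :: l) := by
  refine h.cons (.inr huv) fun a _ => ?_
  rintro (⟨huZ, -⟩ | ⟨hvu, -⟩)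
  · exact hu huZ
  · exact hE.notMem_swap huv hvu

theorem exists_activeWalk_of_reaches (hE : Acyclic E) {u v y : V} (hvu : (v, u) ∈ E)
    (hu : ∀ d, Reaches E u d → d ∉ Z) (huy : Reaches E u y) :
    ∃ l, ActiveWalk E Z (v :: u :: l) ∧ (u :: l).getLast? = some y := by
  induction huy using Relation.ReflTransGen.head_induction_on generalizing v with
  | refl => exact ⟨[], .pair (.inl hvu), rfl⟩
  | @head u c huc _ ih =>
    obtain ⟨l, hactive, hlast⟩ := ih huc fun d hd => hu d (.head huc hd)
    refine ⟨c :: l, ActiveWalk.cons_cons_cons_iff.2 ⟨.inl hvu, ?_, hactive⟩, hlast⟩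
    rintro (⟨huZ, -⟩ | ⟨-, hcu, -⟩)
    · exact hu u .refl huZ
    · exact hE.notMem_swap huc hcu

/-- `v` is connected to `Y` by a walk that is active given `Z`, i.e. `v` is d-connected to `Y`. -/
def ActiveTo (E : Finset (V × V)) (Z Y : Finset V) (v : V) : Prop :=
  ∃ l, ∃ y ∈ Y, ActiveWalk E Z (v :: l) ∧ (v :: l).getLast? = some y

theorem DSep.not_activeTo (hE : Acyclic E) (h : DSep E X Y Z) {x : V} (hx : x ∈ X) :
    ¬ ActiveTo E Z Y x := by
  rintro ⟨l, y, hy, hactive, hlast⟩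
  exact (h x hx y hy).not_activeWalk hE rfl hlast hactive

namespace ActiveTo

theorem of_mem {y : V} (hy : y ∈ Y) : ActiveTo E Z Y y :=
  ⟨[], y, hy, .singleton y, rfl⟩

theorem of_edge (hE : Acyclic E) {u v : V} (h : ActiveTo E Z Y u) (hu : u ∉ Z)
    (huv : (u, v) ∈ E) : ActiveTo E Z Y v := by
  obtain ⟨l, y, hy, hactive, hlast⟩ := h
  exact ⟨u :: l, y, hy, hactive.cons_of_edge hE hu huv, hlast⟩

theorem of_reaches (hE : Acyclic E) {u v : V} (h : ActiveTo E Z Y u)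
    (hu : ∀ d, Reaches E u d → d ∉ Z) (huv : Reaches E u v) : ActiveTo E Z Y v := by
  induction huv with
  | refl => exact h
  | tail huc hcv ih => exact ih.of_edge hE (hu _ huc) hcv

end ActiveTo

end Walks

section DSeparation

variable {E : Finset (V × V)} {X Y Z A : Finset V}

/-- If `u` has a descendant in `Z`, then passing through the potential collider `u` is allowed.
Otherwise `u` has a descendant in `X` or `Y` along edges that avoid `Z`: the former contradicts
d-separation, and the latter makes `v` an ancestor of `Y` outside of `Z`. -/
theorem DSep.activeTo_of_edge (hE : Acyclic E) (h : DSep E X Y Z) {u v : V} (hu : u ∉ Z)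
    (hactive : ActiveTo E Z Y u) (hanc : u ∈ ancestors E (X ∪ Y ∪ Z)) (hvu : (v, u) ∈ E) :
    ActiveTo E Z Y v := by
  by_cases hdesc : ∃ d, Reaches E u d ∧ d ∈ Z
  · obtain ⟨d, hud, hd⟩ := hdesc
    obtain ⟨l, y, hy, hwalk, hlast⟩ := hactive
    refine ⟨u :: l, y, hy, hwalk.cons (.inl hvu) fun a _ => ?_, hlast⟩
    rintro (⟨huZ, -⟩ | ⟨-, -, hnone⟩)
    · exact hu huZ
    · exact hnone d hud hd
  · have hnone : ∀ d, Reaches E u d → d ∉ Z := fun d hud hd => hdesc ⟨d, hud, hd⟩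
    obtain ⟨e, he, hue⟩ := mem_ancestors.1 hanc
    simp only [Finset.mem_union] at he
    rcases he with (heX | heY) | heZ
    · exact absurd (hactive.of_reaches hE hnone hue) (h.not_activeTo hE heX)
    · obtain ⟨l, hwalk, hlast⟩ := exists_activeWalk_of_reaches hE hvu hnone hue
      exact ⟨u :: l, e, heY, hwalk, hlast⟩
    · exact absurd heZ (hnone e hue)

theorem DSep.activeTo_of_mem_family (hE : Acyclic E) (h : DSep E X Y Z) {N u q : V}
    (hanc : N ∈ ancestors E (X ∪ Y ∪ Z)) (hu : u ∈ insert N (Pre E N)) (huZ : u ∉ Z)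
    (hactive : ActiveTo E Z Y u) (hq : q ∈ insert N (Pre E N)) : ActiveTo E Z Y q := by
  rw [Finset.mem_insert, mem_Pre] at hu hq
  have hN : ActiveTo E Z Y N := by
    rcases hu with rfl | huN
    · exact hactive
    · exact hactive.of_edge hE huZ huN
  rcases hq with rfl | hqN
  · exact hN
  by_cases hNZ : N ∈ Z
  · have huN : (u, N) ∈ E := hu.resolve_left fun huN => huZ (huN ▸ hNZ)
    obtain ⟨l, y, hy, hwalk, hlast⟩ := hactive
    refine ⟨N :: u :: l, y, hy, ActiveWalk.cons_cons_cons_iff.2 ⟨.inl hqN, ?_, ?_⟩, hlast⟩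
    · exact not_blockedTriple_of_collider hE hqN huN .refl hNZ
    · exact hwalk.cons_of_edge hE huZ huN
  · exact h.activeTo_of_edge hE hNZ hN hanc hqN

omit [Fintype V] in
/-- A path from `t` either leaves downwards and, having no collider open, stays among the
descendants of `t`, or passes through a parent of `t`, where it is blocked. -/
theorem Ancestral.dsep_Pre (hE : Acyclic E) (hA : Ancestral E A) {t : V} (ht : t ∉ A) :
    DSep E {t} (A \ Pre E t) (Pre E t) := by
  intro x hx y hy W hchain _ hhead hlast
  obtain rfl : x = t := Finset.mem_singleton.1 hx
  obtain ⟨hyA, hyPre⟩ := Finset.mem_sdiff.1 hy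
  by_contra hblocked
  have hwalk : ActiveWalk E (Pre E x) W := ⟨hchain, hblocked⟩
  rcases W with _ | ⟨a, _ | ⟨v, l⟩⟩
  · simp at hhead
  · obtain rfl : a = x := by simpa using hhead
    obtain rfl : a = y := by simpa using hlast
    exact ht hyA
  obtain rfl : a = x := by simpa using hhead
  rcases hwalk.adjacent with hav | hva
  · have hdesc : ∀ d, Reaches E a d → d ∉ Pre E a := fun d hd hdPre =>
      hE a (.tail' hd (mem_Pre.1 hdPre))
    exact ht (hA.mem_of_reaches (hwalk.transGen_getLast hav hdesc hlast).to_reflTransGen hyA)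
  · rcases l with _ | ⟨b, l⟩
    · obtain rfl : v = y := by simpa using hlast
      exact hyPre (mem_Pre.2 hva)
    · obtain ⟨-, htriple, htail⟩ := ActiveWalk.cons_cons_cons_iff.1 hwalk
      exact hE.notMem_swap hva
        (collider_of_not_blockedTriple htriple (mem_Pre.2 hva) (.inr hva) htail.adjacent).1

end DSeparation

section Events

section

omit [Fintype V] [DecidableEq V]

theorem agrees_restrict_iff {U : Finset V} {f b : V → Bool} :
    Agrees f U (U.restrict b) ↔ ∀ x ∈ U, f x = b x :=
  Subtype.forall

theorem exists_restrict_eq (U : Finset V) (d : Asg U) : ∃ b : V → Bool, U.restrict b = d :=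
  ⟨Function.extend Subtype.val d fun _ => true,
    funext fun x => Subtype.val_injective.extend_apply d _ x⟩

theorem dependsOn_agrees (U : Finset V) (d : Asg U) :
    DependsOn (fun f : V → Bool => Agrees f U d) (U : Set V) := fun _ _ h =>
  propext <| forall_congr' fun x => by rw [h x.1 x.2]

theorem dependsOn_and {p q : (V → Bool) → Prop} {s : Set V} (hp : DependsOn p s)
    (hq : DependsOn q s) : DependsOn (fun b => p b ∧ q b) s :=
  fun _ _ h => congr_arg₂ And (hp h) (hq h)

end

variable {μ : (V → Bool) → ℝ} {p q : (V → Bool) → Prop}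

theorem probIf_congr (h : ∀ b, p b ↔ q b) : probIf μ p = probIf μ q := by
  rw [funext fun b => propext (h b)]

theorem probIf_of_forall (h : ∀ b, p b) : probIf μ p = ∑ b, μ b :=
  Finset.sum_congr rfl fun b _ => if_pos (h b)

theorem probIf_eq_sum_filter : probIf μ p = ∑ b with p b, μ b :=
  (Finset.sum_filter ..).symm

theorem probIf_nonneg (hμ : ∀ b, 0 ≤ μ b) : 0 ≤ probIf μ p := by
  rw [probIf_eq_sum_filter]
  exact Finset.sum_nonneg fun b _ => hμ b

theorem probIf_mono (hμ : ∀ b, 0 ≤ μ b) (h : ∀ b, p b → q b) : probIf μ p ≤ probIf μ q := by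
  rw [probIf_eq_sum_filter, probIf_eq_sum_filter]
  exact Finset.sum_le_sum_of_subset_of_nonneg (Finset.monotone_filter_right _ fun b _ => h b)
    fun b _ _ => hμ b

theorem probIf_ite [DecidablePred p] :
    probIf (fun b => if p b then μ b else 0) q = probIf μ fun b => p b ∧ q b := by
  refine Finset.sum_congr rfl fun b _ => ?_
  by_cases hp : p b <;> by_cases hq : q b <;> simp [hp, hq]

theorem probIf_and_add_probIf_not_and :
    probIf μ (fun b => p b ∧ q b) + probIf μ (fun b => ¬ p b ∧ q b) = probIf μ q := by
  simp only [probIf, ← Finset.sum_add_distrib]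
  refine Finset.sum_congr rfl fun b _ => ?_
  by_cases hp : p b <;> by_cases hq : q b <;> simp [hp, hq]

theorem probIf_agrees_univ (b : V → Bool) :
    probIf μ (fun f => Agrees f Finset.univ (Finset.univ.restrict b)) = μ b := by
  have hiff : ∀ f, Agrees f Finset.univ (Finset.univ.restrict b) ↔ f = b := fun f => by
    simp [funext_iff]
  rw [probIf_congr hiff]
  exact (Fintype.sum_eq_single b fun f hf => if_neg hf).trans (if_pos rfl)

theorem probIf_comp_restrict (U : Finset V) (r : Asg U → Prop) [DecidablePred r] :
    probIf μ (fun f => r (U.restrict f)) = ∑ d, if r d then marginal μ U d else 0 := by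
  have hrestrict : ∀ f d, Agrees f U d ↔ U.restrict f = d := fun f d => funext_iff.symm
  simp only [marginal, hrestrict, probIf_eq_sum_filter, ← Finset.sum_filter]
  rw [← Finset.sum_fiberwise_of_maps_to (t := {d | r d}) (g := U.restrict) (by simp)]
  refine Finset.sum_congr rfl fun d hd => Finset.sum_congr ?_ fun _ _ => rfl
  have hd : r d := (Finset.mem_filter.1 hd).2
  ext f
  simp only [Finset.mem_filter, Finset.mem_univ, true_and]
  exact ⟨And.right, fun h => ⟨h ▸ hd, h⟩⟩

theorem indepTriple_iff_mul_eq (hμ : ∀ b, 0 ≤ μ b) {X Y Z : Finset V} :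
    IndepTriple μ X Y Z ↔ ∀ (a : Asg X) (b : Asg Y) (c : Asg Z),
      probIf μ (fun f => Agrees f X a ∧ Agrees f Y b ∧ Agrees f Z c) *
          probIf μ (fun f => Agrees f Z c) =
        probIf μ (fun f => Agrees f X a ∧ Agrees f Z c) *
          probIf μ (fun f => Agrees f Y b ∧ Agrees f Z c) := by
  refine forall₃_congr fun a b c => ?_
  by_cases hYZ : probIf μ (fun f => Agrees f Y b ∧ Agrees f Z c) = 0
  · have hXYZ : probIf μ (fun f => Agrees f X a ∧ Agrees f Y b ∧ Agrees f Z c) = 0 :=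
      le_antisymm ((probIf_mono hμ fun _ h => h.2).trans hYZ.le) (probIf_nonneg hμ)
    simp only [hYZ, hXYZ, true_or, zero_mul, mul_zero]
  · have hZ : probIf μ (fun f => Agrees f Z c) ≠ 0 := fun hZ =>
      hYZ (le_antisymm ((probIf_mono hμ fun _ h => h.2).trans hZ.le) (probIf_nonneg hμ))
    rw [or_iff_right hYZ, div_eq_div_iff hYZ hZ]

/-- Pairs of assignments that agree on `Z` may exchange their values on `U`. -/
theorem probIf_mul_exchange {U Z : Finset V} (hUZ : Disjoint U Z) (c : Asg Z)
    {φ φ' ψ ψ' : (V → Bool) → ℝ} (hφ : DependsOn φ (U ∪ Z : Set V))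
    (hφ' : DependsOn φ' (U ∪ Z : Set V)) (hψ : DependsOn ψ (U : Set V)ᶜ)
    (hψ' : DependsOn ψ' (U : Set V)ᶜ) :
    probIf (fun b => φ b * ψ b) (fun b => Agrees b Z c) *
        probIf (fun b => φ' b * ψ' b) (fun b => Agrees b Z c) =
      probIf (fun b => φ b * ψ' b) (fun b => Agrees b Z c) *
        probIf (fun b => φ' b * ψ b) (fun b => Agrees b Z c) := by
  have hZ : ∀ b b' : V → Bool, ∀ x ∈ Z, U.piecewise b b' x = b' x := fun b b' x hx =>
    Finset.piecewise_eq_of_notMem _ _ _ (Finset.disjoint_right.1 hUZ hx)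
  have hoff : ∀ b b' : V → Bool, ∀ x ∈ (U : Set V)ᶜ, U.piecewise b b' x = b' x := fun b b' x hx =>
    Finset.piecewise_eq_of_notMem _ _ _ hx
  have hon : ∀ b b' : V → Bool, Agrees b Z c → Agrees b' Z c →
      ∀ x ∈ (U ∪ Z : Set V), U.piecewise b b' x = b x := by
    rintro b b' hb hb' x (hx | hx)
    · exact Finset.piecewise_eq_of_mem _ _ _ hx
    · rw [hZ b b' x hx, hb ⟨x, hx⟩, hb' ⟨x, hx⟩]
  have hswap : ∀ b b' : V → Bool, U.piecewise (U.piecewise b b') (U.piecewise b' b) = b :=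
    fun b b' => by
      simp only [Finset.piecewise_idem_left, Finset.piecewise_idem_right, Finset.piecewise_same]
  have hagrees : ∀ b b' : V → Bool, Agrees b' Z c → Agrees (U.piecewise b b') Z c :=
    fun b b' hb' x => (hZ b b' x x.2).trans (hb' x)
  let swap : (V → Bool) × (V → Bool) → (V → Bool) × (V → Bool) :=
    fun a => (U.piecewise a.1 a.2, U.piecewise a.2 a.1)
  simp only [probIf_eq_sum_filter, Finset.sum_mul_sum, ← Finset.sum_product']
  refine Finset.sum_nbij' swap swap ?_ ?_ (fun a _ => Prod.ext (hswap _ _) (hswap _ _))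
    (fun a _ => Prod.ext (hswap _ _) (hswap _ _)) ?_ <;>
    simp only [Finset.mem_product, Finset.mem_filter, Finset.mem_univ, true_and]
  · exact fun a ha => ⟨hagrees _ _ ha.2, hagrees _ _ ha.1⟩
  · exact fun a ha => ⟨hagrees _ _ ha.2, hagrees _ _ ha.1⟩
  · rintro ⟨b, b'⟩ ⟨hb, hb'⟩
    rw [hφ (hon b b' hb hb'), hφ' (hon b' b hb' hb), hψ (hoff b' b), hψ' (hoff b b')]
    ring

theorem probIf_and_and_mul_eq_of_factor {U Z : Finset V} (hUZ : Disjoint U Z) (c : Asg Z)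
    {φ ψ : (V → Bool) → ℝ} (hφ : DependsOn φ (U ∪ Z : Set V)) (hψ : DependsOn ψ (U : Set V)ᶜ)
    (hp : DependsOn p (U : Set V)ᶜ) (hq : DependsOn q (U ∪ Z : Set V)) :
    probIf (fun b => φ b * ψ b) (fun b => p b ∧ q b ∧ Agrees b Z c) *
        probIf (fun b => φ b * ψ b) (fun b => Agrees b Z c) =
      probIf (fun b => φ b * ψ b) (fun b => p b ∧ Agrees b Z c) *
        probIf (fun b => φ b * ψ b) (fun b => q b ∧ Agrees b Z c) := by
  have hφq : DependsOn (fun b => if q b then φ b else 0) (U ∪ Z : Set V) := fun _ _ h => by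
    simp only [hφ h, hq h]
  have hψp : DependsOn (fun b => if p b then ψ b else 0) (U : Set V)ᶜ := fun _ _ h => by
    simp only [hψ h, hp h]
  have hexchange := probIf_mul_exchange hUZ c hφq hφ hψp hψ
  simp only [ite_mul, mul_ite, zero_mul, mul_zero, probIf_ite] at hexchange
  simpa only [and_left_comm, mul_comm] using hexchange

end Events

section SumOut

theorem sum_sum_update {α β M : Type*} [Fintype α] [DecidableEq α] [Fintype β] [AddCommMonoid M]
    (t : α) (F : (α → β) → M) :
    ∑ b, ∑ v, F (Function.update b t v) = Fintype.card β • ∑ b, F b := by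
  let swap : (α → β) × β → (α → β) × β := fun a => (Function.update a.1 t a.2, a.1 t)
  have hswap : Function.Involutive swap := fun a => by simp [swap]
  rw [← Fintype.sum_prod_type', hswap.bijective.sum_comp (fun a => F a.1), Fintype.sum_prod_type]
  simp only [Finset.sum_const, Finset.card_univ, Finset.sum_nsmul]

theorem two_mul_probIf_mul {t : V} {w g : (V → Bool) → ℝ} {p : (V → Bool) → Prop}
    (hw : DependsOn w ({t}ᶜ : Set V)) (hp : DependsOn p ({t}ᶜ : Set V))
    (hg : ∀ b, ∑ v, g (Function.update b t v) = 1) :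
    2 * probIf (fun b => w b * g b) p = probIf w p := by
  have hupdate : ∀ (b : V → Bool) (v : Bool), ∀ x ∈ ({t}ᶜ : Set V), Function.update b t v x = b x :=
    fun b v x hx => Function.update_of_ne hx v b
  have hsum : ∀ b, ∑ v, (fun b => (if p b then w b else 0) * g b) (Function.update b t v) =
      if p b then w b else 0 := fun b => by
    simp only [hp (hupdate b _), hw (hupdate b _), ← Finset.mul_sum, hg, mul_one]
  have htwice := sum_sum_update t fun b : V → Bool => (if p b then w b else 0) * g b
  rw [Finset.sum_congr rfl fun b _ => hsum b, Fintype.card_bool, nsmul_eq_mul] at htwice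
  simpa only [probIf, ite_mul, zero_mul, Nat.cast_ofNat] using htwice.symm

/-- The nonnegative kernels `k N` give, for every node `N`, the conditional probability of the
value of `N` in an assignment given the values of its parents; their product is the joint
distribution of a Bayesian network. -/
structure IsLocalKernel (E : Finset (V × V)) (k : V → (V → Bool) → ℝ) : Prop where
  dependsOn : ∀ N, DependsOn (k N) (insert N (Pre E N) : Finset V)
  nonneg : ∀ N b, 0 ≤ k N b
  sum_update : ∀ N b, ∑ v, k N (Function.update b N v) = 1

variable {E : Finset (V × V)} {k k' : V → (V → Bool) → ℝ} {A : Finset V} {p : (V → Bool) → Prop}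

namespace IsLocalKernel

omit [Fintype V] in
theorem dependsOn_prod (hk : IsLocalKernel E k) {S : Finset V} {s : Set V}
    (hS : ∀ N ∈ S, (insert N (Pre E N) : Set V) ⊆ s) : DependsOn (fun b => ∏ N ∈ S, k N b) s :=
  fun _ _ h => Finset.prod_congr rfl fun N hN =>
    hk.dependsOn N fun x hx => h x (hS N hN (by simpa using hx))

/-- The power of `2` counts the values of the nodes outside of `A`: the sum on the right still runs
over them, although its terms do not depend on them. -/
theorem two_pow_mul_probIf_prod (hk : IsLocalKernel E k) (hE : Acyclic E) (hA : Ancestral E A)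
    (hp : DependsOn p A) :
    2 ^ Aᶜ.card * probIf (fun b => ∏ N, k N b) p = probIf (fun b => ∏ N ∈ A, k N b) p := by
  rw [Finset.compl_eq_univ_sdiff]
  refine hA.induction_insert hE
    (P := fun C => 2 ^ (C \ A).card * probIf (fun b => ∏ N ∈ C, k N b) p = _) (by simp) ?_
  intro C N hC hAC hN _ ih
  have hCN : (C : Set V) ⊆ ({N}ᶜ : Set V) := fun x hx hxN => hN (hxN ▸ hx)
  have hw : DependsOn (fun b => ∏ M ∈ C, k M b) ({N}ᶜ : Set V) := hk.dependsOn_prod fun M hM =>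
    (Set.insert_subset hM (Finset.coe_subset.2 (hC.pre_subset hM))).trans hCN
  have hsum :=
    two_mul_probIf_mul hw (hp.mono ((Finset.coe_subset.2 hAC).trans hCN)) (hk.sum_update N)
  have hcard : (insert N C \ A).card = (C \ A).card + 1 := by
    rw [Finset.insert_sdiff_of_notMem _ fun h => hN (hAC h), Finset.card_insert_of_notMem]
    exact fun h => hN (Finset.sdiff_subset h)
  simp only [Finset.prod_insert hN, mul_comm (k N _)]
  rw [hcard, pow_succ, mul_assoc, hsum, ih]

theorem sum_prod (hk : IsLocalKernel E k) (hE : Acyclic E) : ∑ b, ∏ N, k N b = 1 := by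
  have hsum := hk.two_pow_mul_probIf_prod hE ancestral_empty (p := fun _ => True) fun _ _ _ => rfl
  simpa [probIf] using hsum

theorem probIf_prod_congr (hk : IsLocalKernel E k) (hk' : IsLocalKernel E k') (hE : Acyclic E)
    (hA : Ancestral E A) (hkk' : ∀ N ∈ A, k N = k' N) (hp : DependsOn p A) :
    probIf (fun b => ∏ N, k N b) p = probIf (fun b => ∏ N, k' N b) p := by
  have hprod : (fun b => ∏ N ∈ A, k N b) = fun b => ∏ N ∈ A, k' N b :=
    funext fun b => Finset.prod_congr rfl fun N hN => by rw [hkk' N hN]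
  refine mul_left_cancel₀ (pow_ne_zero Aᶜ.card two_ne_zero) ?_
  rw [hk.two_pow_mul_probIf_prod hE hA hp, hk'.two_pow_mul_probIf_prod hE hA hp, hprod]

end IsLocalKernel

/-- The kernels of the intervention that forces the nodes of `S` to their values in `d`, so that
their product is the truncated factorization of the `do` calculus. -/
def intervene (S : Finset V) (d : V → Bool) (k : V → (V → Bool) → ℝ) (N : V) (b : V → Bool) : ℝ :=
  if N ∈ S then if b N = d N then 1 else 0 else k N b

omit [Fintype V] in
theorem IsLocalKernel.intervene (hk : IsLocalKernel E k) (S : Finset V) (d : V → Bool) :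
    IsLocalKernel E (intervene S d k) where
  dependsOn N b b' h := by
    rw [GBNPaper.intervene, GBNPaper.intervene, h N (Finset.mem_insert_self _ _),
      hk.dependsOn N h]
  nonneg N b := by
    unfold GBNPaper.intervene
    split_ifs
    exacts [zero_le_one, le_rfl, hk.nonneg N b]
  sum_update N b := by
    unfold GBNPaper.intervene
    split_ifs
    · simp
    · exact hk.sum_update N b

theorem prod_intervene (S : Finset V) (d b : V → Bool) :
    ∏ N, intervene S d k N b =
      if Agrees b S (S.restrict d) then ∏ N ∈ Sᶜ, k N b else 0 := by
  have hS : ∏ N ∈ S, intervene S d k N b = ∏ N ∈ S, if b N = d N then 1 else 0 :=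
    Finset.prod_congr rfl fun N hN => if_pos hN
  have hcompl : ∏ N ∈ Sᶜ, intervene S d k N b = ∏ N ∈ Sᶜ, k N b :=
    Finset.prod_congr rfl fun N hN => if_neg (Finset.mem_compl.1 hN)
  rw [← Finset.prod_mul_prod_compl S, hS, hcompl, Finset.prod_ite_zero, Finset.prod_const_one,
    ite_mul, one_mul, zero_mul]
  exact ite_congr (propext agrees_restrict_iff.symm) (fun _ => rfl) fun _ => rfl

theorem probIf_agrees_and_eq_mul_intervene {S : Finset V} {d : V → Bool} {r : ℝ}
    (hr : ∀ b, Agrees b S (S.restrict d) → p b → ∏ N ∈ S, k N b = r) :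
    probIf (fun b => ∏ N, k N b) (fun b => Agrees b S (S.restrict d) ∧ p b) =
      probIf (fun b => ∏ N, intervene S d k N b) p * r := by
  rw [funext (prod_intervene S d), probIf_ite, probIf, probIf, Finset.sum_mul]
  refine Finset.sum_congr rfl fun b _ => ?_
  by_cases hb : Agrees b S (S.restrict d) ∧ p b
  · rw [if_pos hb, if_pos hb, ← Finset.prod_mul_prod_compl S, hr b hb.1 hb.2, mul_comm]
  · rw [if_neg hb, if_neg hb, zero_mul]

theorem IsLocalKernel.probIf_agrees_of_ancestral (hk : IsLocalKernel E k) (hE : Acyclic E)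
    (hA : Ancestral E A) (b : V → Bool) :
    probIf (fun b => ∏ N, k N b) (fun f => Agrees f A (A.restrict b)) = ∏ N ∈ A, k N b := by
  have hprod : DependsOn (fun b => ∏ N ∈ A, k N b) (A : Set V) := hk.dependsOn_prod fun N hN =>
    Set.insert_subset hN (Finset.coe_subset.2 (hA.pre_subset hN))
  have hforced := probIf_agrees_and_eq_mul_intervene (S := A) (d := b) (p := fun _ => True)
    fun f hf _ => hprod (agrees_restrict_iff.1 hf)
  rwa [probIf_of_forall fun _ => trivial, (hk.intervene A b).sum_prod hE, one_mul,
    probIf_congr fun _ => and_iff_left trivial] at hforced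

theorem IsLocalKernel.probIf_node (hk : IsLocalKernel E k) (hE : Acyclic E) (N : V)
    (b : V → Bool) :
    probIf (fun b => ∏ N, k N b) (fun f => f N = b N ∧ Agrees f (Pre E N) ((Pre E N).restrict b)) =
      probIf (fun b => ∏ N, k N b) (fun f => Agrees f (Pre E N) ((Pre E N).restrict b)) *
        k N b := by
  have hforced := probIf_agrees_and_eq_mul_intervene (k := k) (S := {N}) (d := b)
    (p := fun f => Agrees f (Pre E N) ((Pre E N).restrict b)) (r := k N b) fun f hf hPre => by
      rw [Finset.prod_singleton]
      refine hk.dependsOn N fun x hx => ?_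
      rcases Finset.mem_insert.1 (Finset.mem_coe.1 hx) with rfl | hx
      · exact hf ⟨x, Finset.mem_singleton_self x⟩
      · exact hPre ⟨x, hx⟩
  have hpast := hk.probIf_prod_congr (hk.intervene {N} b) hE
    (ancestral_ancestors (S := Pre E N)) (p := fun f => Agrees f (Pre E N) ((Pre E N).restrict b))
    (fun M hM => funext fun f => (if_neg fun hMN => ?_).symm)
    ((dependsOn_agrees _ _).mono (Finset.coe_subset.2 subset_ancestors))
  · rw [hpast, ← hforced]
    refine probIf_congr fun f => and_congr_left' ?_
    simp
  · exact hE.notMem_ancestors_Pre N (Finset.mem_singleton.1 hMN ▸ hM)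

end SumOut

section GlobalMarkov

variable {E : Finset (V × V)} {X Y Z : Finset V} {k : V → (V → Bool) → ℝ}

/-- The kernels of the nodes whose family meets the set `U` of nodes d-connected to `Y` only involve
`U` and `Z`; the other kernels do not involve `U` at all. -/
theorem DSep.exists_prod_eq_mul (hE : Acyclic E) (hk : IsLocalKernel E k) (hYZ : Disjoint Y Z)
    (h : DSep E X Y Z) :
    ∃ (U : Finset V) (φ ψ : (V → Bool) → ℝ), Disjoint U Z ∧ Disjoint X U ∧ Y ⊆ U ∧
      DependsOn φ (U ∪ Z : Set V) ∧ DependsOn ψ (U : Set V)ᶜ ∧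
        ∀ b, ∏ N ∈ ancestors E (X ∪ Y ∪ Z), k N b = φ b * ψ b := by
  let U : Finset V := {v | v ∉ Z ∧ ActiveTo E Z Y v}
  have hU : ∀ {v}, v ∈ U ↔ v ∉ Z ∧ ActiveTo E Z Y v := by simp [U]
  let meetsU : V → Prop := fun N => ∃ u ∈ insert N (Pre E N), u ∈ U
  refine ⟨U, fun b => ∏ N ∈ ancestors E (X ∪ Y ∪ Z) with meetsU N, k N b,
    fun b => ∏ N ∈ ancestors E (X ∪ Y ∪ Z) with ¬ meetsU N, k N b,
    Finset.disjoint_left.2 fun v hv => (hU.1 hv).1,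
    Finset.disjoint_left.2 fun x hx hxU => h.not_activeTo hE hx (hU.1 hxU).2,
    fun y hy => hU.2 ⟨Finset.disjoint_left.1 hYZ hy, .of_mem hy⟩,
    hk.dependsOn_prod fun N hN q hq => ?_, hk.dependsOn_prod fun N hN q hq hqU => ?_,
    fun b => (Finset.prod_filter_mul_prod_filter_not _ _ _).symm⟩
  · obtain ⟨hanc, u, hu, huU⟩ := Finset.mem_filter.1 hN
    obtain ⟨huZ, hactive⟩ := hU.1 huU
    have hq : ActiveTo E Z Y q :=
      h.activeTo_of_mem_family hE hanc hu huZ hactive (by simpa using hq)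
    by_cases hqZ : q ∈ Z
    · exact .inr hqZ
    · exact .inl (hU.2 ⟨hqZ, hq⟩)
  · exact (Finset.mem_filter.1 hN).2 ⟨q, by simpa using hq, hqU⟩

/-- Only the ancestors of `X`, `Y` and `Z` matter, since all other nodes can be summed out. -/
theorem IsLocalKernel.indepTriple (hk : IsLocalKernel E k) (hE : Acyclic E) (hYZ : Disjoint Y Z)
    (h : DSep E X Y Z) : IndepTriple (fun b => ∏ N, k N b) X Y Z := by
  refine (indepTriple_iff_mul_eq fun b => Finset.prod_nonneg fun N _ => hk.nonneg N b).2
    fun a b c => ?_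
  obtain ⟨U, φ, ψ, hUZ, hXU, hYU, hφ, hψ, hprod⟩ := h.exists_prod_eq_mul hE hk hYZ
  let A := ancestors E (X ∪ Y ∪ Z)
  have hsub : X ∪ Y ∪ Z ⊆ A := subset_ancestors
  have hX : DependsOn (fun f : V → Bool => Agrees f X a) (A : Set V) :=
    (dependsOn_agrees X a).mono fun x hx => hsub (by simp_all)
  have hY : DependsOn (fun f : V → Bool => Agrees f Y b) (A : Set V) :=
    (dependsOn_agrees Y b).mono fun x hx => hsub (by simp_all)
  have hZ : DependsOn (fun f : V → Bool => Agrees f Z c) (A : Set V) :=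
    (dependsOn_agrees Z c).mono fun x hx => hsub (by simp_all)
  have hrestrict : ∀ p : (V → Bool) → Prop, DependsOn p (A : Set V) →
      2 ^ Aᶜ.card * probIf (fun b => ∏ N, k N b) p = probIf (fun b => φ b * ψ b) p := fun p hp => by
    rw [hk.two_pow_mul_probIf_prod hE ancestral_ancestors hp, funext hprod]
  have hfactor := probIf_and_and_mul_eq_of_factor hUZ c hφ hψ
    ((dependsOn_agrees X a).mono fun x hx hxU => Finset.disjoint_left.1 hXU hx hxU)
    ((dependsOn_agrees Y b).mono fun y hy => .inl (hYU hy))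
  rw [← hrestrict _ (dependsOn_and hX (dependsOn_and hY hZ)), ← hrestrict _ (dependsOn_and hX hZ),
    ← hrestrict _ (dependsOn_and hY hZ), ← hrestrict _ hZ] at hfactor
  have hpow : (2 : ℝ) ^ Aᶜ.card ≠ 0 := pow_ne_zero _ two_ne_zero
  refine mul_left_cancel₀ (mul_ne_zero hpow hpow) ?_
  linear_combination hfactor

end GlobalMarkov

section BayesianNetwork

variable {B : GBN V}

/-- The local kernels whose product is `distBN B` for a product distribution `ι`: the CPT entries
and, for an initial node, its marginal under `ι`. -/
def nodeKernel (B : GBN V) (N : V) (b : V → Bool) : ℝ :=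
  if h : N ∈ InitSet B.edges then
    ∑ b' : Asg (InitSet B.edges), if b' ⟨N, h⟩ = b N then B.ι b' else 0
  else copyProb B N (b N) b

theorem copyProb_nonneg (N : V) (v : Bool) (b : V → Bool) : 0 ≤ copyProb B N v b := by
  unfold copyProb
  split_ifs
  · exact B.cpt_nonneg _ _
  · exact sub_nonneg.2 (B.cpt_le_one _ _)

theorem dependsOn_copyProb (N : V) (v : Bool) :
    DependsOn (copyProb B N v) (Pre B.edges N : Set V) := fun b b' h => by
  have hrestrict : (fun p : {x // x ∈ Pre B.edges N} => b p.1) = fun p => b' p.1 :=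
    funext fun p => h p.1 p.2
  simp only [copyProb, hrestrict]

theorem sum_copyProb (N : V) (b : V → Bool) : ∑ v, copyProb B N v b = 1 := by
  simp [copyProb]

theorem nodeKernel_of_notMem {N : V} (hN : N ∉ InitSet B.edges) (b : V → Bool) :
    nodeKernel B N b = copyProb B N (b N) b :=
  dif_neg hN

theorem isLocalKernel_nodeKernel (hE : Acyclic B.edges) : IsLocalKernel B.edges (nodeKernel B) where
  dependsOn N b b' h := by
    have hN : b N = b' N := h N (by simp)
    unfold nodeKernel
    split_ifs
    · rw [hN]
    · rw [hN, dependsOn_copyProb N _ fun x hx => h x (by simp_all)]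
  nonneg N b := by
    unfold nodeKernel
    split_ifs
    · exact Finset.sum_nonneg fun b' _ => ite_nonneg (B.ι_dist.1 b') le_rfl
    · exact copyProb_nonneg N _ b
  sum_update N b := by
    unfold nodeKernel
    split_ifs with hN
    · rw [Finset.sum_comm, ← B.ι_dist.2]
      simp
    · have hparents : ∀ v, copyProb B N v (Function.update b N v) = copyProb B N v b := fun v =>
        dependsOn_copyProb N v fun x hx =>
          Function.update_of_ne (ne_of_mem_of_not_mem hx (hE.notMem_Pre_self N)) v b
      simp only [Function.update_self, hparents, sum_copyProb]

theorem prod_InitSet_nodeKernel (hprod : IsProductDist B.ι) (b : V → Bool) :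
    ∏ N ∈ InitSet B.edges, nodeKernel B N b = B.ι ((InitSet B.edges).restrict b) := by
  rw [hprod, ← Finset.prod_coe_sort (InitSet B.edges)]
  exact Finset.prod_congr rfl fun x _ => dif_pos x.2

theorem distBN_eq_prod (hprod : IsProductDist B.ι) : distBN B = fun b => ∏ N, nodeKernel B N b := by
  funext b
  rw [← Finset.prod_mul_prod_compl (InitSet B.edges), prod_InitSet_nodeKernel hprod,
    Finset.compl_eq_univ_sdiff]
  exact congr_arg _ <| Finset.prod_congr rfl fun N hN =>
    (nodeKernel_of_notMem (Finset.mem_sdiff.1 hN).2 b).symm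

theorem isDist_distBN (hE : Acyclic B.edges) (hprod : IsProductDist B.ι) : IsDist (distBN B) := by
  have hk := isLocalKernel_nodeKernel hE
  rw [distBN_eq_prod hprod]
  exact ⟨fun b => Finset.prod_nonneg fun N _ => hk.nonneg N b, hk.sum_prod hE⟩

theorem marginal_distBN (hE : Acyclic B.edges) (hprod : IsProductDist B.ι) :
    marginal (distBN B) (InitSet B.edges) = B.ι := by
  funext d
  obtain ⟨b, rfl⟩ := exists_restrict_eq (InitSet B.edges) d
  rw [marginal, distBN_eq_prod hprod,
    (isLocalKernel_nodeKernel hE).probIf_agrees_of_ancestral hE ancestral_InitSet,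
    prod_InitSet_nodeKernel hprod]

theorem strongCPT_distBN (hE : Acyclic B.edges) (hprod : IsProductDist B.ι) {X : V}
    (hX : X ∉ InitSet B.edges) : StrongCPT B (distBN B) X := by
  intro c
  obtain ⟨d, rfl⟩ := exists_restrict_eq (Pre B.edges X) c
  let b := Function.update d X true
  have hb : (Pre B.edges X).restrict d = (Pre B.edges X).restrict b := funext fun x =>
    (Function.update_of_ne (ne_of_mem_of_not_mem x.2 (hE.notMem_Pre_self X)) _ _).symm
  have hbX : b X = true := Function.update_self ..
  have hcpt : nodeKernel B X b = B.cpt X ((Pre B.edges X).restrict b) := by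
    rw [nodeKernel_of_notMem hX, copyProb, if_pos hbX]
    rfl
  have hnode := (isLocalKernel_nodeKernel hE).probIf_node hE X b
  rwa [hbX, hcpt, ← hb, ← distBN_eq_prod hprod] at hnode

theorem distBN_mem_CptISem (hE : Acyclic B.edges) (hprod : IsProductDist B.ι) :
    distBN B ∈ CptISem B (DSepSet B.edges) := by
  refine ⟨⟨isDist_distBN hE hprod, marginal_distBN hE hprod,
    fun _ hX => strongCPT_distBN hE hprod hX⟩, ?_⟩
  rintro ⟨X, Y, Z⟩ ⟨hdisj, hsep⟩
  refine ⟨hdisj, ?_⟩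
  rw [distBN_eq_prod hprod]
  exact (isLocalKernel_nodeKernel hE).indepTriple hE hdisj.2.2 hsep

end BayesianNetwork

section Uniqueness

variable {B : GBN V} {μ : (V → Bool) → ℝ}

theorem probIf_eq_nodeKernel_of_mem_InitSet (hμ : μ ∈ CptSem B) {t : V}
    (ht : t ∈ InitSet B.edges) (b : V → Bool) :
    probIf μ (fun f => f t = b t) = nodeKernel B t b := by
  rw [nodeKernel, dif_pos ht, ← hμ.2.1]
  exact probIf_comp_restrict (InitSet B.edges) fun d => d ⟨t, ht⟩ = b t

theorem probIf_eq_mul_copyProb (hμ : μ ∈ CptSem B) {t : V} (ht : t ∉ InitSet B.edges)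
    (v : Bool) (b : V → Bool) :
    probIf μ (fun f => f t = v ∧ Agrees f (Pre B.edges t) ((Pre B.edges t).restrict b)) =
      probIf μ (fun f => Agrees f (Pre B.edges t) ((Pre B.edges t).restrict b)) *
        copyProb B t v b := by
  have htrue := hμ.2.2 t ht ((Pre B.edges t).restrict b)
  cases v with
  | true =>
    rw [copyProb, if_pos rfl]
    exact htrue
  | false =>
    have hsplit := probIf_and_add_probIf_not_and (μ := μ) (p := fun f => f t = true)
      (q := fun f => Agrees f (Pre B.edges t) ((Pre B.edges t).restrict b))
    simp only [Bool.not_eq_true] at hsplit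
    rw [copyProb, if_neg Bool.false_ne_true, mul_one_sub]
    exact eq_sub_of_add_eq' (htrue ▸ hsplit)

theorem probIf_eq_mul_nodeKernel (hμ : μ ∈ CptSem B) (t : V) (b : V → Bool) :
    probIf μ (fun f => f t = b t ∧ Agrees f (Pre B.edges t) ((Pre B.edges t).restrict b)) =
      probIf μ (fun f => Agrees f (Pre B.edges t) ((Pre B.edges t).restrict b)) *
        nodeKernel B t b := by
  by_cases ht : t ∈ InitSet B.edges
  · have htrivial : ∀ f, Agrees f (Pre B.edges t) ((Pre B.edges t).restrict b) := fun f =>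
      agrees_restrict_iff.2 fun x hx => absurd (mem_InitSet.1 ht ▸ hx) (Finset.notMem_empty x)
    rw [probIf_of_forall htrivial, hμ.1.2, one_mul, ← probIf_eq_nodeKernel_of_mem_InitSet hμ ht]
    exact probIf_congr fun f => and_iff_left (htrivial f)
  · rw [nodeKernel_of_notMem ht, probIf_eq_mul_copyProb hμ ht]

/-- Given its parents, the new node `t` is independent of the rest of the ancestral set `C`. -/
theorem probIf_agrees_insert (hE : Acyclic B.edges) (hμ : μ ∈ CptISem B (DSepSet B.edges))
    {C : Finset V} {t : V} (hC : Ancestral B.edges C) (ht : t ∉ C) (hPre : Pre B.edges t ⊆ C)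
    (b : V → Bool) :
    probIf μ (fun f => Agrees f (insert t C) ((insert t C).restrict b)) =
      probIf μ (fun f => Agrees f C (C.restrict b)) * nodeKernel B t b := by
  have hpos := hμ.1.1.1
  let R := C \ Pre B.edges t
  have hsep : ({t}, R, Pre B.edges t) ∈ DSepSet B.edges :=
    ⟨⟨Finset.disjoint_singleton_left.2 fun h => ht (Finset.sdiff_subset h),
      Finset.disjoint_singleton_left.2 (hE.notMem_Pre_self t), Finset.sdiff_disjoint⟩,
      hC.dsep_Pre hE ht⟩
  have hind := (indepTriple_iff_mul_eq hpos).1 (hμ.2 hsep).2 (Finset.restrict {t} b)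
    (R.restrict b) ((Pre B.edges t).restrict b)
  have hpast : ∀ f, Agrees f R (R.restrict b) ∧
      Agrees f (Pre B.edges t) ((Pre B.edges t).restrict b) ↔ Agrees f C (C.restrict b) := by
    intro f
    simp only [agrees_restrict_iff, ← Finset.forall_mem_union, R,
      Finset.sdiff_union_of_subset hPre]
  have hnode : ∀ f, Agrees f {t} (Finset.restrict {t} b) ↔ f t = b t := fun f => by
    simp only [agrees_restrict_iff, Finset.mem_singleton, forall_eq]
  have hinsert : ∀ f, Agrees f (insert t C) ((insert t C).restrict b) ↔
      f t = b t ∧ Agrees f C (C.restrict b) := fun f => by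
    simp only [agrees_restrict_iff, Finset.forall_mem_insert]
  simp only [hpast, hnode] at hind
  rw [probIf_eq_mul_nodeKernel hμ.1] at hind
  simp only [hinsert]
  by_cases hzero : probIf μ (fun f => Agrees f (Pre B.edges t) ((Pre B.edges t).restrict b)) = 0
  · have hzero' : ∀ {p : (V → Bool) → Prop}, (∀ f, p f → Agrees f C (C.restrict b)) →
        probIf μ p = 0 := fun hp => le_antisymm
      ((probIf_mono hpos fun f h => ((hpast f).2 (hp f h)).2).trans hzero.le) (probIf_nonneg hpos)
    rw [hzero' fun _ h => h.2, hzero' fun _ h => h, zero_mul]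
  · refine mul_right_cancel₀ hzero ?_
    linear_combination hind

theorem eq_distBN_of_mem_CptISem (hE : Acyclic B.edges) (hprod : IsProductDist B.ι)
    (hμ : μ ∈ CptISem B (DSepSet B.edges)) : μ = distBN B := by
  rw [distBN_eq_prod hprod]
  funext b
  rw [← probIf_agrees_univ (μ := μ) b]
  refine Ancestral.induction_insert hE ancestral_empty
    (P := fun C => probIf μ (fun f => Agrees f C (C.restrict b)) = ∏ N ∈ C, nodeKernel B N b) ?_ ?_
  · rw [Finset.prod_empty, ← hμ.1.1.2]
    exact probIf_of_forall fun f x => absurd x.2 (Finset.notMem_empty x.1)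
  · intro C t hC _ ht hPre ih
    rw [probIf_agrees_insert hE hμ hC ht hPre, ih, Finset.prod_insert ht, mul_comm]

end Uniqueness

/-- For an acyclic GBN `B` with product initial distribution and
`I = d-sep(G)`, the CPT-I semantics is the singleton `{dist_BN(B)}`. -/
theorem stmt2 {V : Type} [Fintype V] [DecidableEq V]
    (B : GBN V) (hacyc : Acyclic B.edges) (hprod : IsProductDist B.ι) :
    CptISem B (DSepSet B.edges) = {distBN B} := by
  refine Set.Subset.antisymm (fun μ hμ => ?_) (Set.singleton_subset_iff.2 ?_)
  · exact eq_distBN_of_mem_CptISem hacyc hprod hμ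
  · exact distBN_mem_CptISem hacyc hprod

end GBNPaper
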